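/- Let d ≥ 3, let D ⊂ ℝ^d be a convex domain, p ∈ D, ξ ∈ ∂D, and let ε > 0 be such that δ̂_D(p, ξ−p) ≥ ε‖ξ−p‖. Then the curve σ : [0,+∞) → D given by σ(t) = ξ + e^{−2t}(p−ξ) satisfies |t−s| ≤ ρ_D(σ(s),σ(t)) ≤ 2ε^{−1}|t−s| for all s, t ≥ 0; in particular σ is a (2ε^{−1}, 0)-quasi-geodesic for ρ_D. -/

import Mathlib

/-!
Write `σ(τ) = ξ + e^{-2τ}(p - ξ)`.

*Lower bound.* A supporting hyperplane of the convex open set `D` at `ξ` gives a linear functional `l`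
with `l y < l ξ` on `D`. Along a conformal harmonic disk `f` in `D`, the function `l ξ - l ∘ f` is
positive and harmonic, hence the real part of a holomorphic function with values in the right
half-plane, and the Schwarz lemma bounds its gradient at `0` by twice its value
(`affine_gradient`). So `g_D(x, v) ≥ |l v| / (2 (l ξ - l x))` (`minMetric_ge`), and integrating the
logarithmic derivative of `l ξ - l ∘ γ` along a curve `γ` bounds its minimal length from below by
half the variation of `log (l ξ - l ∘ γ)` (`log_le_length`). Since `l ξ - l (σ τ)` is
`e^{-2τ} (l ξ - l p)`, this is `|t - s|`.

Bochner integrals of non-integrable functions are `0`, so the lower bound requires the length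
integrand to be integrable for every competing curve (`integrableOn_minMetric`). It is bounded
because the curve is compact in `D`, and measurable because `g_D` is upper semicontinuous on
`D × ℝ^d` (`isOpen_minMetric_lt`): a competing disk at `(x, v)` is shrunk slightly and then moved by a
similarity close to the identity onto a competing disk at a nearby `(x', v')`.

*Upper bound.* For `η < ε` there is a plane `Λ ∋ ξ - p` such that `D` contains the disk of radius
`η ‖ξ - p‖` about `p` in `p + Λ`. By convexity the homothety centred at `ξ` with ratio `e^{-2τ}` maps
it to a disk in `D` about `σ(τ)`, and the affine parametrisation of that disk bounds `g_D(σ, σ')` by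
`2 / η` (`minMetric_le_ray`). Integrate along `σ` and let `η → ε`.
-/


open scoped RealInnerProductSpace ENNReal
open Metric Set Filter

noncomputable section

/-- Euclidean space `ℝ^d`. -/
abbrev Euc (d : ℕ) := EuclideanSpace ℝ (Fin d)

/-- The open unit disk in `ℝ²`. -/
def unitDisk : Set (Euc 2) := Metric.ball 0 1

/-- Partial derivative of `f` at `z` in the `i`-th coordinate direction. -/
def pd {d : ℕ} (i : Fin 2) (f : Euc 2 → Euc d) (z : Euc 2) : Euc d :=
  fderiv ℝ f z (EuclideanSpace.single i 1)

/-- `f` is a conformal harmonic map on the unit disk: it is `C²`, its (vector)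
Laplacian vanishes (equivalently, every component is harmonic), and at each point
its two partial derivatives are orthogonal and of equal norm. -/
def ConformalHarmonicOnDisk {d : ℕ} (f : Euc 2 → Euc d) : Prop :=
  ContDiffOn ℝ 2 f unitDisk ∧
  (∀ z ∈ unitDisk,
    fderiv ℝ (pd 0 f) z (EuclideanSpace.single 0 1)
      + fderiv ℝ (pd 1 f) z (EuclideanSpace.single 1 1) = 0) ∧
  (∀ z ∈ unitDisk, ‖pd 0 f z‖ = ‖pd 1 f z‖ ∧ ⟪pd 0 f z, pd 1 f z⟫ = 0)

/-- The minimal (Forstnerič–Kalaj) metric of a domain `D ⊆ ℝ^d`: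
`g_D(x,v) = inf {1/r : r > 0, f ∈ CH(𝔻, D), f 0 = x, f_x 0 = r • v}`. -/
def minMetric {d : ℕ} (D : Set (Euc d)) (x v : Euc d) : ℝ :=
  sInf {c : ℝ | ∃ r : ℝ, 0 < r ∧ c = 1 / r ∧
    ∃ f : Euc 2 → Euc d, ConformalHarmonicOnDisk f ∧ (∀ z ∈ unitDisk, f z ∈ D) ∧
      f 0 = x ∧ pd 0 f 0 = r • v}

/-- `γ` is a piecewise `C¹` curve on `[a, b]`. -/
def PiecewiseC1On {d : ℕ} (γ : ℝ → Euc d) (a b : ℝ) : Prop :=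
  ContinuousOn γ (Set.Icc a b) ∧
  ∃ (n : ℕ) (t : Fin (n + 2) → ℝ), Monotone t ∧ t 0 = a ∧ t (Fin.last (n + 1)) = b ∧
    ∀ i : Fin (n + 1), ContDiffOn ℝ 1 γ (Set.Icc (t i.castSucc) (t i.succ))

/-- The minimal pseudodistance `ρ_D`: infimum of minimal lengths of piecewise `C¹`
curves in `D` joining `x` to `y`. -/
def minDist {d : ℕ} (D : Set (Euc d)) (x y : Euc d) : ℝ :=
  sInf {L : ℝ | ∃ γ : ℝ → Euc d, PiecewiseC1On γ 0 1 ∧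
    (∀ t ∈ Set.Icc (0:ℝ) 1, γ t ∈ D) ∧ γ 0 = x ∧ γ 1 = y ∧
    L = ∫ t in (0:ℝ)..(1:ℝ), minMetric D (γ t) (deriv γ t)}

/-- The Gromov product `(x|y)_o` with respect to the minimal pseudodistance of `D`. -/
def gromovProd {d : ℕ} (D : Set (Euc d)) (o x y : Euc d) : ℝ :=
  (minDist D x o + minDist D y o - minDist D x y) / 2

/-- `D` is hyperbolic: the minimal pseudodistance is a genuine distance. -/
def MinHyperbolic {d : ℕ} (D : Set (Euc d)) : Prop :=
  ∀ x ∈ D, ∀ y ∈ D, x ≠ y → 0 < minDist D x y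

/-- The Hessian quadratic form of `u` at `x` in direction `v`. -/
def hessQ {d : ℕ} (u : Euc d → ℝ) (x v : Euc d) : ℝ :=
  fderiv ℝ (fun y => fderiv ℝ u y v) x v

/-- `D` is a bounded domain with `C²` boundary, described by a `C²` defining
function `u` on a neighborhood `U` of `∂D` with nonvanishing differential. -/
def IsC2BoundedDomain {d : ℕ} (D : Set (Euc d)) : Prop :=
  IsOpen D ∧ IsConnected D ∧ Bornology.IsBounded D ∧
  ∃ (U : Set (Euc d)) (u : Euc d → ℝ), IsOpen U ∧ frontier D ⊆ U ∧ ContDiffOn ℝ 2 u U ∧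
    D ∩ U = {x | x ∈ U ∧ u x < 0} ∧ frontier D = {x | x ∈ U ∧ u x = 0} ∧
    ∀ x ∈ frontier D, fderiv ℝ u x ≠ 0

/-- `D` is a bounded strongly minimally convex domain: it has a `C²` defining function
which is strongly minimally plurisubharmonic near `∂D`, i.e. the trace of its Hessian
on every 2-plane (spanned by an orthonormal pair `v, w`) is strictly positive. -/
def IsStronglyMinimallyConvex {d : ℕ} (D : Set (Euc d)) : Prop :=
  IsOpen D ∧ IsConnected D ∧ Bornology.IsBounded D ∧
  ∃ (U : Set (Euc d)) (u : Euc d → ℝ), IsOpen U ∧ frontier D ⊆ U ∧ ContDiffOn ℝ 2 u U ∧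
    D ∩ U = {x | x ∈ U ∧ u x < 0} ∧ frontier D = {x | x ∈ U ∧ u x = 0} ∧
    (∀ x ∈ frontier D, fderiv ℝ u x ≠ 0) ∧
    (∀ x ∈ U, ∀ v w : Euc d, ‖v‖ = 1 → ‖w‖ = 1 → ⟪v, w⟫ = 0 →
      0 < hessQ u x v + hessQ u x w)

/-- `D` is a bounded strongly convex domain: convex, with a `C²` defining function whose
Hessian is positive definite on the tangent space at every boundary point
(equivalently, all principal curvatures of `∂D` w.r.t. the inner normal are positive). -/
def IsStronglyConvexDomain {d : ℕ} (D : Set (Euc d)) : Prop :=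
  IsOpen D ∧ IsConnected D ∧ Bornology.IsBounded D ∧ Convex ℝ D ∧
  ∃ (U : Set (Euc d)) (u : Euc d → ℝ), IsOpen U ∧ frontier D ⊆ U ∧ ContDiffOn ℝ 2 u U ∧
    D ∩ U = {x | x ∈ U ∧ u x < 0} ∧ frontier D = {x | x ∈ U ∧ u x = 0} ∧
    (∀ x ∈ frontier D, fderiv ℝ u x ≠ 0) ∧
    (∀ ξ ∈ frontier D, ∀ w : Euc d, w ≠ 0 → fderiv ℝ u ξ w = 0 → 0 < hessQ u ξ w)

/-- For `x ∈ D` with nearest boundary point `p`, the outer unit normal direction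
`n_{π(x)} = (p - x)/‖p - x‖`. -/
def nvec {d : ℕ} (x p : Euc d) : Euc d := ‖p - x‖⁻¹ • (p - x)

/-- Normal component of `v` at `x` with nearest boundary point `p`. -/
def vN {d : ℕ} (x p v : Euc d) : Euc d := ⟪v, nvec x p⟫ • nvec x p

/-- Tangential component of `v` at `x` with nearest boundary point `p`. -/
def vT {d : ℕ} (x p v : Euc d) : Euc d := v - vN x p v

/-- The intrinsic distance `H` on the boundary `∂D`: infimum of Euclidean lengths of
piecewise `C¹` curves in `∂D` joining two boundary points. -/
def bdist {d : ℕ} (D : Set (Euc d)) (ξ η : Euc d) : ℝ :=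
  sInf {L : ℝ | ∃ α : ℝ → Euc d, PiecewiseC1On α 0 1 ∧
    (∀ t ∈ Set.Icc (0:ℝ) 1, α t ∈ frontier D) ∧ α 0 = ξ ∧ α 1 = η ∧
    L = ∫ t in (0:ℝ)..(1:ℝ), ‖deriv α t‖}

/-- `h(x) = δ_D(x)^{1/2}`. -/
def hfun {d : ℕ} (D : Set (Euc d)) (x : Euc d) : ℝ :=
  Real.sqrt (Metric.infDist x (frontier D))

/-- The length of a curve with respect to the boundary Finsler metric
`F(x,v) = ‖v_N‖/(2 δ_D(x)) + ‖v_T‖/δ_D(x)^{1/2}`. -/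
def Flen {d : ℕ} (D : Set (Euc d)) (π : Euc d → Euc d) (γ : ℝ → Euc d) : ℝ :=
  ∫ t in (0:ℝ)..(1:ℝ),
    (‖vN (γ t) (π (γ t)) (deriv γ t)‖ / (2 * Metric.infDist (γ t) (frontier D))
      + ‖vT (γ t) (π (γ t)) (deriv γ t)‖ / Real.sqrt (Metric.infDist (γ t) (frontier D)))

/-- The filling Finsler metric `F`: the boundary Finsler metric on
`N = {δ_D ≤ ε}` and `c‖v‖` elsewhere. -/
def Fmet {d : ℕ} (D : Set (Euc d)) (π : Euc d → Euc d) (ε c : ℝ) (x v : Euc d) : ℝ :=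
  if Metric.infDist x (frontier D) ≤ ε then
    ‖vN x (π x) v‖ / (2 * Metric.infDist x (frontier D))
      + ‖vT x (π x) v‖ / Real.sqrt (Metric.infDist x (frontier D))
  else c * ‖v‖

/-- The intrinsic distance `d_F` associated to the filling Finsler metric `F`. -/
def dF {d : ℕ} (D : Set (Euc d)) (π : Euc d → Euc d) (ε c : ℝ) (x y : Euc d) : ℝ :=
  sInf {L : ℝ | ∃ γ : ℝ → Euc d, PiecewiseC1On γ 0 1 ∧
    (∀ t ∈ Set.Icc (0:ℝ) 1, γ t ∈ D) ∧ γ 0 = x ∧ γ 1 = y ∧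
    L = ∫ t in (0:ℝ)..(1:ℝ), Fmet D π ε c (γ t) (deriv γ t)}

/-- The hyperbolic filling distance
`d_H(x,y) = 2 log((H(π x, π y) + h(x) ∨ h(y)) / √(h(x) h(y)))`. -/
def dH {d : ℕ} (D : Set (Euc d)) (π : Euc d → Euc d) (x y : Euc d) : ℝ :=
  2 * Real.log ((bdist D (π x) (π y) + max (hfun D x) (hfun D y)) /
    Real.sqrt (hfun D x * hfun D y))

/-- `δ̂_D(x,v)`: the supremum over 2-dimensional linear subspaces `Λ ∋ v` of the
distance (in `ℝ≥0∞`, so `∞` if `x + Λ ⊆ D`) from `x` to `(x + Λ) \ D`. -/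
def deltaHat {d : ℕ} (D : Set (Euc d)) (x v : Euc d) : ℝ≥0∞ :=
  ⨆ (Λ : Submodule ℝ (Euc d)) (_ : Module.finrank ℝ Λ = 2) (_ : v ∈ Λ),
    ⨅ (y : Euc d) (_ : y - x ∈ Λ ∧ y ∉ D), edist x y

/-- The positive parameter at which the ray `t ↦ x + t • v` exits the convex domain `D`
(equal to `0`, by the `sInf ∅ = 0` convention, when the ray stays in `D`,
i.e. when the corresponding chord endpoint is the point at infinity). -/
def chordParam {d : ℕ} (D : Set (Euc d)) (x v : Euc d) : ℝ :=
  sInf {s : ℝ | 0 < s ∧ x + s • v ∉ D}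

/-- The Hilbert Finsler metric `h_D(x,v) = (‖v‖/2)(1/‖x-a‖ + 1/‖x-b‖)` of a convex
domain, with the convention `1/‖x-∞‖ = 0` (here `‖x-b‖ = chordParam D x v • ‖v‖` and
`‖x-a‖ = chordParam D x (-v) • ‖v‖`, and division by zero is zero). -/
def hilbertFinsler {d : ℕ} (D : Set (Euc d)) (x v : Euc d) : ℝ :=
  (1/2) * (1 / chordParam D x v + 1 / chordParam D x (-v))

/- The Hilbert distance of a convex domain: for `x ≠ y`,
`H_D(x,y) = ½ log((‖x-b‖ ‖y-a‖)/(‖x-a‖ ‖y-b‖))` where `a, x, y, b` are aligned on the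
chord through `x, y`, with the convention that ratios involving the point at infinity
(detected by `chordParam = 0`) are equal to `1`. -/
open Classical in
def hilbertDist {d : ℕ} (D : Set (Euc d)) (x y : Euc d) : ℝ :=
  if x = y then 0 else
    (1/2) * Real.log
      ((if chordParam D x (y - x) = 0 then 1
        else chordParam D x (y - x) / (chordParam D x (y - x) - 1)) *
       (if chordParam D x (x - y) = 0 then 1
        else (1 + chordParam D x (x - y)) / chordParam D x (x - y)))

/-! ### Round disks as competitors for the minimal metric -/

lemma unitDisk_isOpen : IsOpen unitDisk := Metric.isOpen_ball

lemma mem_unitDisk_iff (z : Euc 2) : z ∈ unitDisk ↔ z 0 ^ 2 + z 1 ^ 2 < 1 := by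
  rw [unitDisk, Metric.mem_ball, dist_zero_right, EuclideanSpace.norm_eq]
  simp [Fin.sum_univ_two, Real.sqrt_lt']

lemma minMetric_nonneg {d : ℕ} (D : Set (Euc d)) (x v : Euc d) : 0 ≤ minMetric D x v := by
  refine Real.sInf_nonneg ?_
  rintro c ⟨r, hr, rfl, -⟩
  positivity

lemma minMetric_le {d : ℕ} {D : Set (Euc d)} {x v : Euc d} {r : ℝ} (hr : 0 < r)
    {f : Euc 2 → Euc d} (hf : ConformalHarmonicOnDisk f) (hD : ∀ z ∈ unitDisk, f z ∈ D)
    (h0 : f 0 = x) (h1 : pd 0 f 0 = r • v) : minMetric D x v ≤ 1 / r := by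
  refine csInf_le ⟨0, ?_⟩ ⟨r, hr, rfl, f, hf, hD, h0, h1⟩
  rintro c ⟨r, hr, rfl, -⟩
  positivity

/-- The affine map `z ↦ x + z₀ v + z₁ w` from the plane; it parametrises a round disk when `v` and
`w` are orthogonal of equal length. -/
def affDisk {d : ℕ} (x v w : Euc d) (z : Euc 2) : Euc d := x + z 0 • v + z 1 • w

lemma hasFDerivAt_affDisk {d : ℕ} (x v w : Euc d) (z : Euc 2) :
    HasFDerivAt (affDisk x v w)
      ((EuclideanSpace.proj (𝕜 := ℝ) (0 : Fin 2)).smulRight v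
        + (EuclideanSpace.proj (𝕜 := ℝ) (1 : Fin 2)).smulRight w) z := by
  have h := (((EuclideanSpace.proj (𝕜 := ℝ) (0 : Fin 2) : Euc 2 →L[ℝ] ℝ).smulRight v
        + (EuclideanSpace.proj (𝕜 := ℝ) (1 : Fin 2) : Euc 2 →L[ℝ] ℝ).smulRight w).hasFDerivAt
          (x := z)).const_add x
  refine h.congr_of_eventuallyEq (Eventually.of_forall fun y => ?_)
  simp [affDisk, add_assoc]

lemma pd_affDisk {d : ℕ} (x v w : Euc d) :
    pd 0 (affDisk x v w) = (fun _ => v) ∧ pd 1 (affDisk x v w) = fun _ => w := by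
  constructor <;> ext1 z <;> rw [pd, (hasFDerivAt_affDisk x v w z).fderiv] <;> simp

lemma conformalHarmonic_affDisk {d : ℕ} (x v w : Euc d) (hvw : ‖v‖ = ‖w‖)
    (ho : ⟪v, w⟫ = 0) : ConformalHarmonicOnDisk (affDisk x v w) := by
  obtain ⟨h0, h1⟩ := pd_affDisk x v w
  refine ⟨?_, ?_, ?_⟩
  · apply ContDiff.contDiffOn
    unfold affDisk
    fun_prop
  · intro z _
    rw [h0, h1]; simp
  · intro z _
    rw [h0, h1]; exact ⟨hvw, ho⟩

lemma minMetric_le_of_affDisk {d : ℕ} {D : Set (Euc d)} {x v w : Euc d} {r : ℝ} (hr : 0 < r)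
    (hvw : ‖v‖ = ‖w‖) (ho : ⟪v, w⟫ = 0)
    (hD : ∀ a b : ℝ, a ^ 2 + b ^ 2 < 1 → x + (a * r) • v + (b * r) • w ∈ D) :
    minMetric D x v ≤ 1 / r := by
  refine minMetric_le hr (conformalHarmonic_affDisk x (r • v) (r • w) ?_ ?_) ?_ ?_ ?_
  · simp [norm_smul, hvw]
  · simp [inner_smul_left, inner_smul_right, ho]
  · intro z hz
    simpa [affDisk, smul_smul] using hD _ _ ((mem_unitDisk_iff z).1 hz)
  · simp [affDisk]
  · rw [(pd_affDisk _ _ _).1]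

/-- Inside a subspace of dimension at least two, every vector has an orthogonal vector of the same
length. -/
lemma exists_orthogonal_mem {d : ℕ} (Λ : Submodule ℝ (Euc d)) (hΛ : 2 ≤ Module.finrank ℝ Λ)
    (v : Euc d) (hv : v ∈ Λ) : ∃ w ∈ Λ, ‖v‖ = ‖w‖ ∧ ⟪v, w⟫ = 0 := by
  have hle : Submodule.span ℝ {v} ≤ Λ := by
    rw [Submodule.span_singleton_le_iff_mem]; exact hv
  have h1 := Submodule.finrank_add_inf_finrank_orthogonal hle
  have h2 : Module.finrank ℝ (Submodule.span ℝ {v}) ≤ 1 := by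
    simpa using finrank_span_le_card (R := ℝ) ({v} : Set (Euc d))
  have h3 : ((Submodule.span ℝ {v})ᗮ ⊓ Λ) ≠ ⊥ := by
    intro h
    rw [h, finrank_bot] at h1
    omega
  obtain ⟨w, ⟨hw1, hw2⟩, hw0⟩ := Submodule.exists_mem_ne_zero_of_ne_bot h3
  have hn : ‖w‖ ≠ 0 := norm_ne_zero_iff.2 hw0
  refine ⟨(‖v‖ / ‖w‖) • w, Λ.smul_mem _ hw2, ?_, ?_⟩
  · rw [norm_smul, Real.norm_eq_abs, abs_of_nonneg (by positivity)]
    field_simp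
  · rw [inner_smul_right, Submodule.mem_orthogonal_singleton_iff_inner_right.1 hw1, mul_zero]

/-- A point of the affine disk of radius `r‖v‖` spanned by a nondegenerate orthogonal frame
of length `‖v‖` lies at distance less than `r‖v‖` from the centre. -/
lemma norm_frame_lt {d : ℕ} {v w : Euc d} (hvw : ‖v‖ = ‖w‖) (ho : ⟪v, w⟫ = 0) (hv : v ≠ 0)
    {r : ℝ} (hr : 0 < r) {a b : ℝ} (hab : a ^ 2 + b ^ 2 < 1) :
    ‖(a * r) • v + (b * r) • w‖ < r * ‖v‖ := by
  have hv' : 0 < ‖v‖ := norm_pos_iff.2 hv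
  refine lt_of_pow_lt_pow_left₀ 2 (by positivity) ?_
  rw [norm_add_sq_real]
  simp only [inner_smul_left, inner_smul_right, ho, norm_smul, ← hvw, Real.norm_eq_abs, mul_pow,
    sq_abs]
  have : 0 < r ^ 2 * ‖v‖ ^ 2 := by positivity
  simp
  nlinarith

/-- If `D` contains the disk of radius `R` about `x` in `x + Λ`, where `Λ` has dimension at least
two, then `g_D(x, v) ≤ ‖v‖ / R` for every `v ∈ Λ`. -/
lemma minMetric_le_of_plane {d : ℕ} {D : Set (Euc d)} {x v : Euc d} (Λ : Submodule ℝ (Euc d))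
    (hΛ : 2 ≤ Module.finrank ℝ Λ) (hv : v ∈ Λ) (hx : x ∈ D) {R : ℝ} (hR : 0 < R)
    (hD : ∀ y ∈ Λ, ‖y‖ < R → x + y ∈ D) : minMetric D x v ≤ ‖v‖ / R := by
  obtain ⟨w, hwΛ, hvw, ho⟩ := exists_orthogonal_mem Λ hΛ v hv
  rcases eq_or_ne v 0 with rfl | hv0
  · -- constant maps compete with every `r`, so the infimum is `0`
    have hw : w = 0 := by simpa using hvw.symm
    subst hw
    have key : ∀ r : ℝ, 0 < r → minMetric D x 0 ≤ 1 / r := fun r hr =>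
      minMetric_le_of_affDisk hr hvw ho (by simpa using fun _ _ _ => hx)
    simp only [norm_zero, zero_div]
    refine le_of_forall_pos_le_add fun η hη => ?_
    simpa using key η⁻¹ (by positivity)
  · have hn : 0 < ‖v‖ := norm_pos_iff.2 hv0
    have := minMetric_le_of_affDisk (D := D) (x := x) (r := R / ‖v‖) (by positivity) hvw ho
      (fun a b hab => by
        rw [add_assoc]
        refine hD _ (Λ.add_mem (Λ.smul_mem _ hv) (Λ.smul_mem _ hwΛ)) ?_
        have := norm_frame_lt hvw ho hv0 (r := R / ‖v‖) (by positivity) hab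
        rwa [div_mul_cancel₀ _ hn.ne'] at this)
    simpa using this

lemma minMetric_le_of_ball {d : ℕ} (hd : 2 ≤ d) {D : Set (Euc d)} {x v : Euc d}
    {R : ℝ} (hR : 0 < R) (hD : Metric.ball x R ⊆ D) : minMetric D x v ≤ ‖v‖ / R := by
  refine minMetric_le_of_plane ⊤ (by simpa using hd) trivial (hD (mem_ball_self hR)) hR ?_
  intro y _ hy
  exact hD (by simpa using hy)

/-- Every direction at a point of an open set is realised by some conformal harmonic disk, so the
infimum defining `minMetric` is never over the empty set. -/
lemma minMetric_set_nonempty {d : ℕ} (hd : 2 ≤ d) {D : Set (Euc d)} (hD : IsOpen D) {x : Euc d}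
    (hx : x ∈ D) (v : Euc d) : {c : ℝ | ∃ r : ℝ, 0 < r ∧ c = 1 / r ∧
      ∃ f : Euc 2 → Euc d, ConformalHarmonicOnDisk f ∧ (∀ z ∈ unitDisk, f z ∈ D) ∧
        f 0 = x ∧ pd 0 f 0 = r • v}.Nonempty := by
  obtain ⟨R, hR, hball⟩ := Metric.isOpen_iff.1 hD x hx
  obtain ⟨w, -, hvw, ho⟩ := exists_orthogonal_mem (d := d) ⊤ (by simpa using hd) v trivial
  have hr : 0 < R / (‖v‖ + 1) := by positivity
  refine ⟨_, R / (‖v‖ + 1), hr, rfl, affDisk x ((R / (‖v‖ + 1)) • v) ((R / (‖v‖ + 1)) • w),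
    conformalHarmonic_affDisk _ _ _ ?_ ?_, ?_, ?_, ?_⟩
  · simp [norm_smul, hvw]
  · simp [inner_smul_left, inner_smul_right, ho]
  · intro z hz
    rcases eq_or_ne v 0 with rfl | hv
    · have hw : w = 0 := by simpa using hvw.symm
      simpa [affDisk, hw] using hx
    · have h1 := norm_frame_lt hvw ho hv hr ((mem_unitDisk_iff z).1 hz)
      apply hball
      rw [affDisk, add_assoc, mem_ball, dist_eq_norm, add_sub_cancel_left, smul_smul, smul_smul]
      refine h1.trans ?_
      rw [div_mul_eq_mul_div, div_lt_iff₀ (by positivity)]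
      nlinarith
  · simp [affDisk]
  · rw [(pd_affDisk _ _ _).1]

/-! ### Upper semicontinuity of the minimal metric -/

/-- Post-composition with a similarity and pre-composition with a contraction of the disk preserve
conformal harmonic maps. -/
lemma conformalHarmonic_similar {d : ℕ} {f : Euc 2 → Euc d} (hf : ConformalHarmonicOnDisk f)
    (A : Euc d ≃ₗᵢ[ℝ] Euc d) (k ρ : ℝ) (hρ : 0 < ρ) (hρ1 : ρ ≤ 1) (c : Euc d) :
    ConformalHarmonicOnDisk (fun z => c + k • A (f (ρ • z))) ∧
    ∀ i, ∀ z ∈ unitDisk, pd i (fun z => c + k • A (f (ρ • z))) z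
      = (k * ρ) • A (pd i f (ρ • z)) := by
  obtain ⟨hc, hl, hcf⟩ := hf
  have hmaps : ∀ z ∈ unitDisk, ρ • z ∈ unitDisk := by
    intro z hz
    simp only [unitDisk, mem_ball, dist_zero_right, norm_smul, Real.norm_eq_abs, abs_of_pos hρ]
      at hz ⊢
    nlinarith [norm_nonneg z]
  have hfd : ∀ z ∈ unitDisk, DifferentiableAt ℝ f z := fun z hz =>
    (hc.contDiffAt (unitDisk_isOpen.mem_nhds hz)).differentiableAt (by norm_num)
  have hpd : ∀ i, ∀ z ∈ unitDisk, DifferentiableAt ℝ (pd i f) z := by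
    intro i z hz
    have h1 : ContDiffAt ℝ 1 (fderiv ℝ f) z :=
      (hc.contDiffAt (unitDisk_isOpen.mem_nhds hz)).fderiv_right (by norm_num)
    exact (h1.differentiableAt (by norm_num)).clm_apply (differentiableAt_const _)
  have comp : ∀ (g : Euc 2 → Euc d) (k : ℝ) (c : Euc d) (z : Euc 2) (e : Euc 2),
      DifferentiableAt ℝ g (ρ • z) →
      fderiv ℝ (fun z => c + k • A (g (ρ • z))) z e = (k * ρ) • A (fderiv ℝ g (ρ • z) e) := by
    intro g k c z e hg
    have h1 : HasFDerivAt (fun z : Euc 2 => ρ • z) (ρ • ContinuousLinearMap.id ℝ (Euc 2)) z :=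
      (hasFDerivAt_id z).const_smul ρ
    have h2 := hg.hasFDerivAt.comp z h1
    have h3 := ((A.toContinuousLinearEquiv : Euc d →L[ℝ] Euc d).hasFDerivAt.comp z h2)
    have h4 := (h3.const_smul k).const_add c
    have h5 := h4.fderiv
    have : (fun z => c + k • A (g (ρ • z))) = (fun x ↦ c + (k •
         ((A.toContinuousLinearEquiv : Euc d →L[ℝ] Euc d) ∘ g ∘ fun z ↦ ρ • z)) x) := rfl
    rw [this, h5]
    simp [smul_smul]
  have hpdg : ∀ i, ∀ z ∈ unitDisk, pd i (fun z => c + k • A (f (ρ • z))) z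
      = (k * ρ) • A (pd i f (ρ • z)) := fun i z hz => comp f k c z _ (hfd _ (hmaps z hz))
  refine ⟨⟨?_, ?_, ?_⟩, hpdg⟩
  · have h1 : ContDiffOn ℝ 2 (fun z : Euc 2 => f (ρ • z)) unitDisk :=
      hc.comp (contDiff_const_smul ρ).contDiffOn hmaps
    exact contDiffOn_const.add ((A.contDiff.comp_contDiffOn h1).const_smul k)
  · intro z hz
    have key : ∀ i, ∀ e, fderiv ℝ (pd i (fun z => c + k • A (f (ρ • z)))) z e
        = (k * ρ * ρ) • A (fderiv ℝ (pd i f) (ρ • z) e) := by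
      intro i e
      have h1 : pd i (fun z => c + k • A (f (ρ • z))) =ᶠ[nhds z]
          fun z => 0 + (k * ρ) • A (pd i f (ρ • z)) := by
        filter_upwards [unitDisk_isOpen.mem_nhds hz] with y hy
        rw [hpdg i y hy, zero_add]
      rw [h1.fderiv_eq, comp (pd i f) (k * ρ) 0 z e (hpd i _ (hmaps z hz))]
    rw [key, key, ← smul_add, ← map_add, hl _ (hmaps z hz)]
    simp
  · intro z hz
    obtain ⟨h1, h2⟩ := hcf _ (hmaps z hz)
    rw [hpdg 0 z hz, hpdg 1 z hz]
    simp [norm_smul, inner_smul_left, inner_smul_right, h1, h2]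

/-- The isometry obtained by reflecting in the line of `v` and then in the line of
`‖v'‖ v + ‖v‖ v'`. For `v ≠ 0` it carries the direction of `v` to that of `v'`, it is the identity
when `v' = v`, and it is continuous in `v'` near `v`. -/
def rot {d : ℕ} (v v' : Euc d) : Euc d ≃ₗᵢ[ℝ] Euc d :=
  (Submodule.reflection (ℝ ∙ v)).trans (Submodule.reflection (ℝ ∙ (‖v'‖ • v + ‖v‖ • v')))

lemma rot_apply_self {d : ℕ} {v : Euc d} (hv : v ≠ 0) (v' : Euc d) :
    (‖v'‖ / ‖v‖) • rot v v' v = v' := by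
  have hn : ‖v‖ ≠ 0 := norm_ne_zero_iff.2 hv
  have h1 : Submodule.reflection (ℝ ∙ v) v = v :=
    (Submodule.reflection_eq_self_iff v).2 (Submodule.mem_span_singleton_self v)
  have h2 : Submodule.reflection (ℝ ∙ (‖v'‖ • v + ‖v‖ • v')) (‖v'‖ • v) = ‖v‖ • v' := by
    have h := Submodule.reflection_sub (F := Euc d) (v := ‖v'‖ • v) (w := -(‖v‖ • v'))
      (by simp [norm_smul, mul_comm])
    rw [sub_neg_eq_add, Submodule.reflection_orthogonal_apply, neg_inj] at h
    exact h
  rw [rot, LinearIsometryEquiv.trans_apply, h1, div_eq_inv_mul, mul_smul, ← map_smul, h2,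
    smul_smul, inv_mul_cancel₀ hn, one_smul]

lemma rot_self {d : ℕ} {v : Euc d} (hv : v ≠ 0) (y : Euc d) : rot v v y = y := by
  have hn : ‖v‖ ≠ 0 := norm_ne_zero_iff.2 hv
  have h1 : (ℝ ∙ (‖v‖ • v + ‖v‖ • v)) = (ℝ ∙ v) := by
    rw [← add_smul]
    exact Submodule.span_singleton_smul_eq (IsUnit.mk0 _ (by simpa using hn)) v
  simp [rot, h1]

lemma rot_apply {d : ℕ} (v v' y : Euc d) : rot v v' y =
    (2 : ℝ) • (⟪‖v'‖ • v + ‖v‖ • v', Submodule.reflection (ℝ ∙ v) y⟫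
      / ‖‖v'‖ • v + ‖v‖ • v'‖ ^ 2) • (‖v'‖ • v + ‖v‖ • v') - Submodule.reflection (ℝ ∙ v) y := by
  rw [rot, LinearIsometryEquiv.trans_apply, Submodule.reflection_singleton_apply, two_smul,
    two_smul]
  rfl

lemma continuousAt_rot {d : ℕ} {v : Euc d} (hv : v ≠ 0) (y : Euc d) :
    ContinuousAt (fun q : Euc d × Euc d => rot v q.1 q.2) (v, y) := by
  have hn : ‖v‖ ≠ 0 := norm_ne_zero_iff.2 hv
  have hw : ‖(‖v‖ • v + ‖v‖ • v)‖ ^ 2 ≠ 0 := by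
    rw [← add_smul, norm_smul]
    have : ‖‖v‖ + ‖v‖‖ ≠ 0 := norm_ne_zero_iff.2 (by simpa using hn)
    positivity
  simp only [rot_apply]
  have hc : Continuous (fun q : Euc d × Euc d => ‖q.1‖ • v + ‖v‖ • q.1) := by fun_prop
  have hr : Continuous (fun q : Euc d × Euc d => Submodule.reflection (ℝ ∙ v) q.2) :=
    (LinearIsometryEquiv.continuous _).comp continuous_snd
  have h1 : ContinuousAt (fun q : Euc d × Euc d =>
      ⟪‖q.1‖ • v + ‖v‖ • q.1, Submodule.reflection (ℝ ∙ v) q.2⟫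
        / ‖‖q.1‖ • v + ‖v‖ • q.1‖ ^ 2) (v, y) :=
    (hc.inner hr).continuousAt.div (hc.norm.pow 2).continuousAt hw
  exact ((h1.smul hc.continuousAt).const_smul (2 : ℝ)).sub hr.continuousAt

/-- Upper semicontinuity of the minimal metric: a competitor disk at `(x, v)` can be shrunk
slightly, translated, rotated and rescaled to become one at any nearby `(x', v')`. -/
lemma isOpen_minMetric_lt {d : ℕ} (hd : 2 ≤ d) {D : Set (Euc d)} (hD : IsOpen D) (c : ℝ) :
    IsOpen {q : Euc d × Euc d | q.1 ∈ D ∧ minMetric D q.1 q.2 < c} := by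
  rw [isOpen_iff_mem_nhds]
  rintro ⟨x, v⟩ ⟨hx, hlt⟩
  simp only at hx hlt
  obtain ⟨R, hR, hball⟩ := Metric.isOpen_iff.1 hD x hx
  have hmem : ∀ᶠ q : Euc d × Euc d in nhds (x, v), q.1 ∈ D :=
    continuous_fst.continuousAt.eventually (hD.mem_nhds hx)
  rcases eq_or_ne v 0 with rfl | hv
  -- at `v = 0` there is no direction to rotate; round disks give a small bound nearby
  · have hc : 0 < c := (minMetric_nonneg D x 0).trans_lt hlt
    have h1 : ∀ᶠ q : Euc d × Euc d in nhds (x, 0), q.1 ∈ ball x (R / 2) :=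
      continuous_fst.continuousAt.eventually (ball_mem_nhds x (by positivity))
    have h2 : ∀ᶠ q : Euc d × Euc d in nhds (x, 0), ‖q.2‖ / (R / 2) < c := by
      have : ContinuousAt (fun q : Euc d × Euc d => ‖q.2‖ / (R / 2)) (x, 0) := by fun_prop
      refine this.eventually_lt continuousAt_const ?_
      simpa using hc
    filter_upwards [h1, h2, hmem] with q hq1 hq2 hq3
    refine ⟨hq3, (minMetric_le_of_ball hd (R := R / 2) (by positivity) ?_).trans_lt hq2⟩
    refine (ball_subset_ball' ?_).trans hball
    linarith [mem_ball.1 hq1]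
  · have hne := minMetric_set_nonempty hd hD hx v
    obtain ⟨_, ⟨r, hr, rfl, f, hf, hfD, hf0, hf1⟩, hrc⟩ := exists_lt_of_csInf_lt hne hlt
    obtain ⟨ρ, hρ0, hρ1, hρc⟩ : ∃ ρ : ℝ, 0 < ρ ∧ ρ < 1 ∧ 1 / (r * ρ) < c := by
      have hc : 0 < c := lt_trans (by positivity) hrc
      have h1 : 1 / (r * c) < 1 := by
        rw [div_lt_iff₀ hr] at hrc
        rw [div_lt_one (by positivity)]; linarith
      obtain ⟨ρ, h2, h3⟩ := exists_between h1
      have h4 : 0 < 1 / (r * c) := by positivity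
      have hρ : 0 < ρ := h4.trans h2
      refine ⟨ρ, hρ, h3, ?_⟩
      rw [div_lt_iff₀ (by positivity)] at h2
      rw [div_lt_iff₀ (by positivity)]; linarith
    have htube : ∀ᶠ q : Euc d × Euc d in nhds (x, v), ∀ z ∈ closedBall (0 : Euc 2) ρ,
        q.1 + (‖q.2‖ / ‖v‖) • rot v q.2 (f z - x) ∈ D := by
      refine (isCompact_closedBall 0 ρ).eventually_forall_of_forall_eventually ?_
      intro z hz
      have hzd : z ∈ unitDisk := closedBall_subset_ball hρ1 hz
      have hfz : ContinuousAt f z := hf.1.continuousOn.continuousAt (unitDisk_isOpen.mem_nhds hzd)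
      have hcont : ContinuousAt (fun q : (Euc d × Euc d) × Euc 2 =>
          q.1.1 + (‖q.1.2‖ / ‖v‖) • rot v q.1.2 (f q.2 - x)) ((x, v), z) := by
        have hk : ContinuousAt (fun q : (Euc d × Euc d) × Euc 2 => ‖q.1.2‖ / ‖v‖)
            ((x, v), z) := by fun_prop
        refine ContinuousAt.add (by fun_prop) (hk.smul ?_)
        have h1 : ContinuousAt (fun q : (Euc d × Euc d) × Euc 2 => (q.1.2, f q.2 - x))
            ((x, v), z) := by
          refine ContinuousAt.prodMk (by fun_prop) ?_
          exact (ContinuousAt.comp (f := Prod.snd) hfz continuousAt_snd).sub continuousAt_const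
        exact ContinuousAt.comp (f := fun q : (Euc d × Euc d) × Euc 2 => (q.1.2, f q.2 - x))
          (continuousAt_rot hv (f z - x)) h1
      refine hcont.eventually_mem (hD.mem_nhds ?_)
      simpa [rot_self hv, div_self (norm_ne_zero_iff.2 hv)] using hfD z hzd
    filter_upwards [htube, hmem] with q hq hqD
    refine ⟨hqD, lt_of_le_of_lt ?_ hρc⟩
    obtain ⟨hg, hpd⟩ := conformalHarmonic_similar hf (rot v q.2) (‖q.2‖ / ‖v‖) ρ hρ0 hρ1.le
      (q.1 - (‖q.2‖ / ‖v‖) • rot v q.2 x)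
    have h0 : (0 : Euc 2) ∈ unitDisk := by simp [unitDisk]
    refine minMetric_le (by positivity) hg ?_ ?_ ?_
    · intro z hz
      have : ρ • z ∈ closedBall (0 : Euc 2) ρ := by
        simp only [unitDisk, mem_ball, dist_zero_right] at hz
        rw [mem_closedBall, dist_zero_right, norm_smul, Real.norm_eq_abs, abs_of_pos hρ0]
        nlinarith
      have := hq _ this
      rw [map_sub, smul_sub] at this
      convert this using 1
      abel
    · simp [hf0]
    · rw [hpd 0 0 h0, smul_zero, hf1, map_smul, smul_smul]
      conv_rhs => rw [← rot_apply_self hv q.2]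
      rw [smul_smul]
      congr 1
      ring

/-! ### Comparison with a half-space -/

/-- Schwarz lemma for a holomorphic `F` with `Re F > 0` on the disk, obtained by composing `F` with
the Cayley transform that sends `F 0` to `0`. -/
lemma schwarz_halfplane {F : ℂ → ℂ} (hF : DifferentiableOn ℂ F (ball 0 1))
    (hpos : ∀ z ∈ ball (0 : ℂ) 1, 0 < (F z).re) : ‖deriv F 0‖ ≤ 2 * (F 0).re := by
  have h0 : (0 : ℂ) ∈ ball (0 : ℂ) 1 := by simp
  set a := F 0 with ha
  have hapos : 0 < a.re := hpos 0 h0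
  have hne : ∀ z ∈ ball (0 : ℂ) 1, F z + (starRingEnd ℂ) a ≠ 0 := by
    intro z hz h
    have := congrArg Complex.re h
    simp at this
    linarith [hpos z hz]
  let φ : ℂ → ℂ := fun z => (F z - a) / (F z + (starRingEnd ℂ) a)
  have hφ : DifferentiableOn ℂ φ (ball 0 1) :=
    (hF.sub_const a).div (hF.add_const _) hne
  have hφ0 : φ 0 = 0 := by simp [φ, ha]
  have hmaps : MapsTo φ (ball 0 1) (closedBall (φ 0) 1) := by
    intro z hz
    rw [hφ0, mem_closedBall, dist_zero_right, norm_div]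
    refine div_le_one_of_le₀ ?_ (norm_nonneg _)
    refine le_of_sq_le_sq ?_ (norm_nonneg _)
    rw [← Complex.normSq_eq_norm_sq, ← Complex.normSq_eq_norm_sq, Complex.normSq_apply,
      Complex.normSq_apply]
    simp
    nlinarith [mul_pos (hpos z hz) hapos]
  have hs := Complex.norm_deriv_le_one_of_mapsTo_ball hφ hmaps one_pos
  have hFd : HasDerivAt F (deriv F 0) 0 :=
    (hF.differentiableAt (isOpen_ball.mem_nhds h0)).hasDerivAt
  have hd : HasDerivAt φ (deriv F 0 / (a + (starRingEnd ℂ) a)) 0 := by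
    have h := hne 0 h0
    refine ((hFd.sub_const a).div (hFd.add_const ((starRingEnd ℂ) a)) h).congr_deriv ?_
    rw [← ha] at h ⊢
    field_simp
    ring
  rw [hd.deriv, norm_div, Complex.add_conj] at hs
  have hn : ‖((2 * a.re : ℝ) : ℂ)‖ = 2 * a.re := by
    rw [Complex.norm_real, Real.norm_eq_abs, abs_of_pos (by positivity)]
  rw [hn, div_le_one (by positivity)] at hs
  exact hs

/-- Gradient form of Harnack's inequality at the centre of the disk: a positive harmonic function is
the real part of a holomorphic one. -/
lemma harnack_gradient {u : ℂ → ℝ} (hu : InnerProductSpace.HarmonicOnNhd u (ball 0 1))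
    (hpos : ∀ z ∈ ball (0 : ℂ) 1, 0 < u z) : |fderiv ℝ u 0 1| ≤ 2 * u 0 := by
  obtain ⟨F, hF, hre⟩ := hu.exists_analyticOnNhd_ball_re_eq
  have h0 : (0 : ℂ) ∈ ball (0 : ℂ) 1 := by simp
  have hs := schwarz_halfplane hF.differentiableOn (fun z hz => by
    have := hre hz
    simp only at this
    rw [this]; exact hpos z hz)
  have hd : HasDerivAt F (deriv F 0) 0 := (hF 0 h0).differentiableAt.hasDerivAt
  have h1 : fderiv ℝ u 0 1 = (deriv F 0).re := by
    have he : u =ᶠ[nhds 0] fun z => (F z).re := by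
      filter_upwards [isOpen_ball.mem_nhds h0] with z hz using (hre hz).symm
    have h2 : HasFDerivAt (fun z => (F z).re) _ (0 : ℂ) :=
      Complex.reCLM.hasFDerivAt.comp (0 : ℂ) (hd.hasFDerivAt.restrictScalars ℝ)
    rw [he.fderiv_eq, h2.fderiv]
    simp
  have h2 : (F 0).re = u 0 := hre h0
  rw [h1, ← h2]
  exact (Complex.abs_re_le_norm _).trans hs

/-- The identification of `ℂ` with `ℝ²`. -/
def cplane : ℂ →L[ℝ] Euc 2 :=
  Complex.reCLM.smulRight (EuclideanSpace.single 0 1)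
    + Complex.imCLM.smulRight (EuclideanSpace.single 1 1)

lemma cplane_mem {z : ℂ} (hz : z ∈ ball (0 : ℂ) 1) : cplane z ∈ unitDisk := by
  rw [mem_unitDisk_iff]
  simp only [mem_ball, dist_zero_right] at hz
  have : ‖z‖ ^ 2 < 1 := by nlinarith [norm_nonneg z]
  rw [← Complex.normSq_eq_norm_sq, Complex.normSq_apply] at this
  simp [cplane]
  nlinarith

/-- A positive affine function along a conformal harmonic disk satisfies Harnack's gradient
inequality at the centre. -/
lemma affine_gradient {d : ℕ} {f : Euc 2 → Euc d} (hf : ConformalHarmonicOnDisk f)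
    (l : Euc d →L[ℝ] ℝ) (c : ℝ) (hpos : ∀ z ∈ unitDisk, 0 < c - l (f z)) :
    |l (pd 0 f 0)| ≤ 2 * (c - l (f 0)) := by
  obtain ⟨hc, hl, -⟩ := hf
  have hfd : ∀ z ∈ unitDisk, DifferentiableAt ℝ f z := fun z hz =>
    (hc.contDiffAt (unitDisk_isOpen.mem_nhds hz)).differentiableAt (by norm_num)
  have hf1 : ∀ z ∈ unitDisk, DifferentiableAt ℝ (fderiv ℝ f) z := fun z hz =>
    ((hc.contDiffAt (unitDisk_isOpen.mem_nhds hz)).fderiv_right (m := 1)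
      (by norm_num)).differentiableAt (by norm_num)
  let U : ℂ → ℝ := fun z => c - l (f (cplane z))
  have hU1 : ∀ z ∈ ball (0 : ℂ) 1, ∀ a, fderiv ℝ U z a
      = - l (fderiv ℝ f (cplane z) (cplane a)) := by
    intro z hz a
    have h1 : HasFDerivAt U _ z := (l.hasFDerivAt.comp z
      ((hfd _ (cplane_mem hz)).hasFDerivAt.comp z cplane.hasFDerivAt)).const_sub c
    rw [h1.fderiv]
    simp
  have hUc : ∀ z ∈ ball (0 : ℂ) 1, ContDiffAt ℝ 2 U z := by
    intro z hz
    have h1 := hc.contDiffAt (unitDisk_isOpen.mem_nhds (cplane_mem hz))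
    exact contDiffAt_const.sub (l.contDiff.contDiffAt.comp z
      (h1.comp z cplane.contDiff.contDiffAt))
  have hU2 : ∀ z ∈ ball (0 : ℂ) 1, ∀ a, fderiv ℝ (fderiv ℝ U) z a a
      = - l (fderiv ℝ (fun y => fderiv ℝ f y (cplane a)) (cplane z) (cplane a)) := by
    intro z hz a
    have hd : DifferentiableAt ℝ (fderiv ℝ U) z :=
      ((hUc z hz).fderiv_right (m := 1) (by norm_num)).differentiableAt (by norm_num)
    have h1 : fderiv ℝ (fderiv ℝ U) z a a = fderiv ℝ (fun y => fderiv ℝ U y a) z a := by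
      rw [fderiv_clm_apply hd (differentiableAt_const _)]
      simp
    have h2 : (fun y => fderiv ℝ U y a) =ᶠ[nhds z]
        fun y => - l (fderiv ℝ f (cplane y) (cplane a)) := by
      filter_upwards [isOpen_ball.mem_nhds hz] with y hy using hU1 y hy a
    have h3 : DifferentiableAt ℝ (fun y => fderiv ℝ f y (cplane a)) (cplane z) :=
      (hf1 _ (cplane_mem hz)).clm_apply (differentiableAt_const _)
    have h4 : HasFDerivAt (fun y => - l (fderiv ℝ f (cplane y) (cplane a))) _ z :=
      (l.hasFDerivAt.comp z (h3.hasFDerivAt.comp z cplane.hasFDerivAt)).neg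
    rw [h1, h2.fderiv_eq, h4.fderiv]
    simp
  have e1 : cplane 1 = EuclideanSpace.single 0 1 := by simp [cplane]
  have eI : cplane Complex.I = EuclideanSpace.single 1 1 := by simp [cplane]
  have hharm : InnerProductSpace.HarmonicOnNhd U (ball 0 1) := by
    intro z hz
    refine ⟨hUc z hz, ?_⟩
    filter_upwards [isOpen_ball.mem_nhds hz] with y hy
    rw [InnerProductSpace.laplacian_eq_iteratedFDeriv_complexPlane]
    simp only [iteratedFDeriv_two_apply, Matrix.cons_val_zero, Matrix.cons_val_one]
    rw [hU2 y hy, hU2 y hy, e1, eI, ← neg_add, ← map_add]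
    have := hl _ (cplane_mem hy)
    unfold pd at this
    rw [this]
    simp
  have h0 : (0 : ℂ) ∈ ball (0 : ℂ) 1 := by simp
  have := harnack_gradient hharm (fun z hz => hpos _ (cplane_mem hz))
  rw [hU1 0 h0, e1, abs_neg] at this
  simpa [U, pd] using this

/-- Comparison with the half-space `{l < c}` containing `D`, via the gradient estimate applied to
each competing disk. -/
lemma minMetric_ge {d : ℕ} (hd : 2 ≤ d) {D : Set (Euc d)} (hD : IsOpen D) {x v : Euc d}
    (hx : x ∈ D) (l : Euc d →L[ℝ] ℝ) (c : ℝ) (hpos : ∀ y ∈ D, 0 < c - l y) :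
    |l v| / (2 * (c - l x)) ≤ minMetric D x v := by
  refine le_csInf (minMetric_set_nonempty hd hD hx v) ?_
  rintro _ ⟨r, hr, rfl, f, hf, hfD, hf0, hf1⟩
  have h := affine_gradient hf l c (fun z hz => hpos _ (hfD z hz))
  rw [hf0, hf1, map_smul, smul_eq_mul, abs_mul, abs_of_pos hr] at h
  have := hpos x hx
  rw [div_le_div_iff₀ (by positivity) hr]
  linarith

/-! ### Integrability of the length integrand and the lower bound for lengths -/

/-- Off finitely many parameters a piecewise `C¹` curve is differentiable, with bounded speed. -/
lemma PiecewiseC1On.exists_bound {d : ℕ} {γ : ℝ → Euc d} (h : PiecewiseC1On γ 0 1) :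
    ∃ (S : Set ℝ) (M : ℝ), S.Finite ∧ ∀ x ∈ Icc (0 : ℝ) 1 \ S,
      DifferentiableAt ℝ γ x ∧ ‖deriv γ x‖ ≤ M := by
  obtain ⟨-, n, t, hmono, h0, h1, hC⟩ := h
  have hb : ∀ i : Fin (n + 1), ∃ M : ℝ, ∀ x ∈ Ioo (t i.castSucc) (t i.succ),
      DifferentiableAt ℝ γ x ∧ ‖deriv γ x‖ ≤ M := by
    intro i
    rcases le_or_gt (t i.succ) (t i.castSucc) with hle | hlt
    · exact ⟨0, fun x hx => absurd (hx.1.trans hx.2) (not_lt.2 hle)⟩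
    obtain ⟨M, hM⟩ := isCompact_Icc.exists_bound_of_continuousOn
      ((hC i).continuousOn_derivWithin (uniqueDiffOn_Icc hlt) le_rfl)
    refine ⟨M, fun x hx => ?_⟩
    have hnh : Icc (t i.castSucc) (t i.succ) ∈ nhds x := Icc_mem_nhds hx.1 hx.2
    refine ⟨((hC i).contDiffAt hnh).differentiableAt (by norm_num), ?_⟩
    rw [← derivWithin_of_mem_nhds hnh]
    exact hM x (Ioo_subset_Icc_self hx)
  choose M hM using hb
  refine ⟨range t, ∑ i, |M i|, finite_range t, ?_⟩
  rintro x ⟨hx, hxt⟩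
  obtain ⟨i, hi⟩ : ∃ i : Fin (n + 1), x ∈ Ioo (t i.castSucc) (t i.succ) := by
    by_contra hcon
    push Not at hcon
    have hne : ∀ j, t j ≠ x := fun j hj => hxt ⟨j, hj⟩
    have : ∀ j, t j < x := by
      intro j
      induction j using Fin.induction with
      | zero => exact lt_of_le_of_ne (h0 ▸ hx.1) (hne 0)
      | succ j ih =>
        by_contra hlt
        exact hcon j ⟨ih, lt_of_le_of_ne (not_lt.1 hlt) (hne _).symm⟩
    have := this (Fin.last (n + 1))
    rw [h1] at this
    exact absurd hx.2 (not_le.2 this)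
  refine ⟨(hM i x hi).1, (hM i x hi).2.trans ((le_abs_self _).trans ?_)⟩
  exact Finset.single_le_sum (f := fun i => |M i|) (fun _ _ => abs_nonneg _) (Finset.mem_univ i)

open MeasureTheory in
/-- The integrand of the minimal length is genuinely integrable: measurable by upper
semicontinuity, and bounded because the curve stays at positive distance from `∂D`. -/
lemma integrableOn_minMetric {d : ℕ} (hd : 2 ≤ d) {D : Set (Euc d)} (hD : IsOpen D)
    {γ : ℝ → Euc d} (hγ : PiecewiseC1On γ 0 1) (hγD : ∀ t ∈ Icc (0 : ℝ) 1, γ t ∈ D) :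
    IntegrableOn (fun t => minMetric D (γ t) (deriv γ t)) (Icc 0 1) := by
  classical
  obtain ⟨S, M, hS, hM⟩ := hγ.exists_bound
  have hcompact : IsCompact (γ '' Icc 0 1) := isCompact_Icc.image_of_continuousOn hγ.1
  obtain ⟨δ, hδ, hthick⟩ := hcompact.exists_thickening_subset_open hD
    (by rintro _ ⟨t, ht, rfl⟩; exact hγD t ht)
  let G : Euc d × Euc d → ℝ := fun q => if q.1 ∈ D then minMetric D q.1 q.2 else 0
  -- `minMetric` is upper semicontinuous only over the open set `D`; its extension by zero is Borel
  have hG : Measurable G := by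
    refine measurable_of_Iio fun c => ?_
    have : G ⁻¹' Iio c = {q | q.1 ∈ D ∧ minMetric D q.1 q.2 < c} ∪
        ({q | q.1 ∈ D}ᶜ ∩ {_q | 0 < c}) := by
      ext q
      by_cases hq : q.1 ∈ D <;> simp [G, hq]
    rw [this]
    exact (isOpen_minMetric_lt hd hD c).measurableSet.union
      ((hD.preimage continuous_fst).measurableSet.compl.inter (MeasurableSet.const _))
  have hmeas : AEStronglyMeasurable (fun t => minMetric D (γ t) (deriv γ t))
      (volume.restrict (Icc (0 : ℝ) 1)) := by
    have h1 : AEMeasurable γ (volume.restrict (Icc (0 : ℝ) 1)) :=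
      hγ.1.aemeasurable measurableSet_Icc
    have h2 : AEMeasurable (deriv γ) (volume.restrict (Icc (0 : ℝ) 1)) :=
      (measurable_deriv γ).aemeasurable
    refine (hG.comp_aemeasurable (h1.prodMk h2)).aestronglyMeasurable.congr ?_
    filter_upwards [ae_restrict_mem measurableSet_Icc] with t ht
    simp [G, hγD t ht]
  refine Integrable.of_bound hmeas (M / δ) ?_
  have hS0 : ∀ᵐ t ∂(volume.restrict (Icc (0 : ℝ) 1)), t ∉ S :=
    ae_restrict_of_ae (compl_mem_ae_iff.2 (hS.measure_zero volume))
  filter_upwards [ae_restrict_mem measurableSet_Icc, hS0] with t ht htS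
  rw [Real.norm_eq_abs, abs_of_nonneg (minMetric_nonneg _ _ _)]
  have hball : ball (γ t) δ ⊆ D :=
    (ball_subset_thickening (mem_image_of_mem γ ht) δ).trans hthick
  refine (minMetric_le_of_ball hd hδ hball).trans ?_
  gcongr
  exact (hM t ⟨ht, htS⟩).2

open MeasureTheory in
/-- Lower bound for minimal lengths by the logarithmic variation of a positive affine function. -/
lemma log_le_length {d : ℕ} (hd : 2 ≤ d) {D : Set (Euc d)} (hD : IsOpen D)
    {γ : ℝ → Euc d} (hγ : PiecewiseC1On γ 0 1) (hγD : ∀ t ∈ Icc (0 : ℝ) 1, γ t ∈ D)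
    (l : Euc d →L[ℝ] ℝ) (c : ℝ) (hpos : ∀ y ∈ D, 0 < c - l y) :
    |Real.log (c - l (γ 1)) - Real.log (c - l (γ 0))|
      ≤ 2 * ∫ t in (0:ℝ)..1, minMetric D (γ t) (deriv γ t) := by
  obtain ⟨S, M, hS, hM⟩ := hγ.exists_bound
  have hg := integrableOn_minMetric hd hD hγ hγD
  let φ' : ℝ → ℝ := fun t => (-l (deriv γ t)) / (c - l (γ t))
  have hbound : ∀ t ∈ Icc (0 : ℝ) 1, ‖φ' t‖ ≤ 2 * minMetric D (γ t) (deriv γ t) := by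
    intro t ht
    have h1 := minMetric_ge hd hD (v := deriv γ t) (hγD t ht) l c hpos
    have h2 := hpos _ (hγD t ht)
    rw [Real.norm_eq_abs, abs_div, abs_neg, abs_of_pos h2]
    calc |l (deriv γ t)| / (c - l (γ t))
        = 2 * (|l (deriv γ t)| / (2 * (c - l (γ t)))) := by field_simp
      _ ≤ _ := by gcongr
  have hphi_int : IntegrableOn φ' (Icc 0 1) := by
    refine Integrable.mono' (hg.const_mul 2) ?_ ?_
    · have h1 : AEMeasurable γ (volume.restrict (Icc (0 : ℝ) 1)) :=
        hγ.1.aemeasurable measurableSet_Icc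
      have h2 : AEMeasurable (deriv γ) (volume.restrict (Icc (0 : ℝ) 1)) :=
        (measurable_deriv γ).aemeasurable
      exact ((l.continuous.measurable.comp_aemeasurable h2).neg.div
        ((l.continuous.measurable.comp_aemeasurable h1).const_sub c)).aestronglyMeasurable
    · filter_upwards [ae_restrict_mem measurableSet_Icc] with t ht using hbound t ht
  have hphi_int' : IntervalIntegrable φ' volume 0 1 :=
    (intervalIntegrable_iff_integrableOn_Icc_of_le zero_le_one).2 hphi_int
  have hg' : IntervalIntegrable (fun t => minMetric D (γ t) (deriv γ t)) volume 0 1 :=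
    (intervalIntegrable_iff_integrableOn_Icc_of_le zero_le_one).2 hg
  have hftc : ∫ t in (0:ℝ)..1, φ' t = Real.log (c - l (γ 1)) - Real.log (c - l (γ 0)) := by
    refine integral_eq_of_hasDerivAt_off_countable_of_le
      (fun t => Real.log (c - l (γ t))) φ' zero_le_one hS.countable ?_ ?_ hphi_int'
    · refine ContinuousOn.log ?_ fun t ht => (hpos _ (hγD t ht)).ne'
      exact continuousOn_const.sub (l.continuous.comp_continuousOn hγ.1)
    · rintro t ⟨ht, htS⟩
      have ht' := Ioo_subset_Icc_self ht
      have h1 := (hM t ⟨ht', htS⟩).1.hasDerivAt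
      exact ((l.hasFDerivAt.comp_hasDerivAt t h1).const_sub c).log (hpos _ (hγD t ht')).ne'
  rw [← hftc, ← intervalIntegral.integral_const_mul, ← Real.norm_eq_abs]
  refine intervalIntegral.norm_integral_le_of_norm_le zero_le_one ?_ (hg'.const_mul 2)
  filter_upwards with t ht using hbound t (Ioc_subset_Icc_self ht)

/-! ### Homotheties centred at a boundary point -/

/-- For `0 < k ≤ 1`, the homothety of ratio `k` centred at a point of the closure
maps a convex open set into itself. -/
lemma homothety_mem {d : ℕ} {D : Set (Euc d)} (hOpen : IsOpen D) (hConv : Convex ℝ D)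
    {ξ : Euc d} (hξ : ξ ∈ closure D) {q : Euc d} (hq : q ∈ D) {k : ℝ} (hk : 0 < k)
    (hk1 : k ≤ 1) : ξ + k • (q - ξ) ∈ D := by
  have h := hConv.combo_interior_closure_mem_interior (hOpen.interior_eq.symm ▸ hq) hξ hk
    (sub_nonneg.2 hk1) (by ring)
  rw [hOpen.interior_eq] at h
  convert h using 1
  module

/-- The homothety of ratio `k` centred at `ξ` carries the disk of radius `R` about `p` in `p + Λ` to
a disk of radius `kR` in `D`, which bounds the minimal metric along `Λ` from above. -/
lemma minMetric_le_ray {d : ℕ} {D : Set (Euc d)} (hOpen : IsOpen D) (hConv : Convex ℝ D)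
    {p ξ : Euc d} (hp : p ∈ D) (hξ : ξ ∈ closure D) (Λ : Submodule ℝ (Euc d))
    (hΛ : 2 ≤ Module.finrank ℝ Λ) {R : ℝ} (hR : 0 < R)
    (hD : ∀ y ∈ Λ, ‖y‖ < R → p + y ∈ D) {v : Euc d} (hv : v ∈ Λ) {k : ℝ} (hk : 0 < k)
    (hk1 : k ≤ 1) : minMetric D (ξ + k • (p - ξ)) v ≤ ‖v‖ / (k * R) := by
  refine minMetric_le_of_plane Λ hΛ hv (homothety_mem hOpen hConv hξ hp hk hk1)
    (by positivity) fun y hy hyR => ?_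
  have h1 : p + k⁻¹ • y ∈ D := by
    refine hD _ (Λ.smul_mem _ hy) ?_
    rw [norm_smul, Real.norm_eq_abs, abs_of_pos (by positivity), inv_mul_lt_iff₀ hk]
    exact hyR
  have h2 := homothety_mem hOpen hConv hξ h1 hk hk1
  convert h2 using 1
  rw [add_sub_right_comm, smul_add, smul_inv_smul₀ hk.ne', add_assoc]

/-- Quasi-geodesics in convex domains: if `p ∈ D`, `ξ ∈ ∂D` and
`δ̂_D(p, ξ-p) ≥ ε‖ξ-p‖`, then `σ(t) = ξ + e^{-2t}(p-ξ)` satisfies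
`|t-s| ≤ ρ_D(σ(s),σ(t)) ≤ 2ε⁻¹|t-s|`; in particular it is a `(2ε⁻¹,0)`-quasi-geodesic. -/
theorem quasi_geodesic_ray_in_convex_domain
    (d : ℕ) (hd : 3 ≤ d) (D : Set (Euc d))
    (hOpen : IsOpen D) (hConn : IsConnected D) (hConv : Convex ℝ D)
    (p : Euc d) (hp : p ∈ D) (ξ : Euc d) (hξ : ξ ∈ frontier D)
    (ε : ℝ) (hε : 0 < ε)
    (hδ : ENNReal.ofReal (ε * ‖ξ - p‖) ≤ deltaHat D p (ξ - p)) :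
    ∀ s t : ℝ, 0 ≤ s → 0 ≤ t →
      |t - s| ≤ minDist D (ξ + Real.exp (-2*s) • (p - ξ)) (ξ + Real.exp (-2*t) • (p - ξ)) ∧
      minDist D (ξ + Real.exp (-2*s) • (p - ξ)) (ξ + Real.exp (-2*t) • (p - ξ))
        ≤ 2 * ε⁻¹ * |t - s| := by
  intro s t hs ht
  have hd2 : 2 ≤ d := by omega
  rw [hOpen.frontier_eq] at hξ
  obtain ⟨hξc, hξD⟩ := hξ
  -- the ray reparametrised over `[0, 1]`
  let γ : ℝ → Euc d := fun u => ξ + Real.exp (-2 * (s + u * (t - s))) • (p - ξ)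
  have hγdiff : ContDiff ℝ 1 γ := by
    unfold γ
    fun_prop
  have hγC : PiecewiseC1On γ 0 1 := by
    refine ⟨hγdiff.continuous.continuousOn, 0, ![0, 1], ?_, rfl, rfl,
      fun i => hγdiff.contDiffOn⟩
    intro i j hij
    fin_cases i <;> fin_cases j <;> simp_all
  have hk1 : ∀ u ∈ Icc (0 : ℝ) 1, Real.exp (-2 * (s + u * (t - s))) ≤ 1 := by
    intro u hu
    rw [Real.exp_le_one_iff]
    nlinarith [mul_nonneg hu.1 ht, mul_nonneg (sub_nonneg.2 hu.2) hs]
  have hγD : ∀ u ∈ Icc (0 : ℝ) 1, γ u ∈ D := fun u hu =>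
    homothety_mem hOpen hConv hξc hp (Real.exp_pos _) (hk1 u hu)
  have hγ0 : γ 0 = ξ + Real.exp (-2*s) • (p - ξ) := by simp [γ]
  have hγ1 : γ 1 = ξ + Real.exp (-2*t) • (p - ξ) := by simp [γ]
  constructor
  · -- the supporting half-space of `D` at `ξ`, where `l ξ - l (σ τ)` is a multiple of `e^{-2τ}`
    obtain ⟨l, hl⟩ := geometric_hahn_banach_open_point hConv hOpen hξD
    have hpos : ∀ y ∈ D, 0 < l ξ - l y := fun y hy => sub_pos.2 (hl y hy)
    have hlog : ∀ τ : ℝ, Real.log (l ξ - l (ξ + Real.exp (-2*τ) • (p - ξ)))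
        = -2 * τ + Real.log (l ξ - l p) := by
      intro τ
      rw [← Real.log_exp (-2 * τ), ← Real.log_mul (Real.exp_pos _).ne' (hpos p hp).ne',
        Real.log_exp]
      congr 1
      simp only [map_add, map_smul, map_sub, smul_eq_mul]
      ring
    refine le_csInf ⟨_, γ, hγC, hγD, hγ0, hγ1, rfl⟩ ?_
    rintro _ ⟨α, hα, hαD, hα0, hα1, rfl⟩
    have h := log_le_length hd2 hOpen hα hαD l (l ξ) hpos
    rw [hα0, hα1, hlog, hlog] at h
    have h2 : -2 * t + Real.log (l ξ - l p) - (-2 * s + Real.log (l ξ - l p))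
        = -2 * (t - s) := by ring
    rw [h2, abs_mul] at h
    norm_num at h
    exact h
  · have hne : 0 < ‖ξ - p‖ := by
      rw [norm_pos_iff, sub_ne_zero]
      rintro rfl
      exact hξD hp
    -- the supremum in `deltaHat` need not be attained, so `ε` is approached from below
    have key : ∀ η : ℝ, 0 < η → η < ε →
        minDist D (ξ + Real.exp (-2*s) • (p - ξ)) (ξ + Real.exp (-2*t) • (p - ξ))
          ≤ 2 * η⁻¹ * |t - s| := by
      intro η hη hηε
      have hlt : ENNReal.ofReal (η * ‖ξ - p‖) < deltaHat D p (ξ - p) := by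
        refine lt_of_lt_of_le ?_ hδ
        rw [ENNReal.ofReal_lt_ofReal_iff (by positivity)]
        gcongr
      simp only [deltaHat, lt_iSup_iff] at hlt
      obtain ⟨Λ, hΛ, hmem, hlt⟩ := hlt
      have hdisk : ∀ y ∈ Λ, ‖y‖ < η * ‖ξ - p‖ → p + y ∈ D := by
        intro y hy hyR
        by_contra hcon
        have h1 := hlt.trans_le (iInf₂_le (p + y) ⟨by simpa using hy, hcon⟩)
        rw [edist_dist, dist_self_add_right, ENNReal.ofReal_lt_ofReal_iff_of_nonneg (by positivity)]
          at h1
        exact lt_asymm h1 hyR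
      have hle : minDist D (ξ + Real.exp (-2*s) • (p - ξ)) (ξ + Real.exp (-2*t) • (p - ξ))
          ≤ ∫ u in (0:ℝ)..1, minMetric D (γ u) (deriv γ u) := by
        refine csInf_le ⟨0, ?_⟩ ⟨γ, hγC, hγD, hγ0, hγ1, rfl⟩
        rintro _ ⟨α, -, -, -, -, rfl⟩
        exact intervalIntegral.integral_nonneg zero_le_one fun _ _ => minMetric_nonneg _ _ _
      have hbd : ∀ u ∈ Set.uIoc (0 : ℝ) 1, ‖minMetric D (γ u) (deriv γ u)‖ ≤ 2 * η⁻¹ * |t - s| := by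
        intro u hu
        rw [uIoc_of_le zero_le_one] at hu
        rw [Real.norm_eq_abs, abs_of_nonneg (minMetric_nonneg _ _ _)]
        set k := Real.exp (-2 * (s + u * (t - s))) with hk
        have hkpos : 0 < k := Real.exp_pos _
        have hder : deriv γ u = (k * (-2 * (t - s))) • (p - ξ) := by
          have h1 : HasDerivAt (fun u : ℝ => -2 * (s + u * (t - s))) (-2 * (t - s)) u := by
            simpa using (((hasDerivAt_id u).mul_const (t - s)).const_add s).const_mul (-2)
          exact ((h1.exp.smul_const (p - ξ)).const_add ξ).deriv
        have hv : deriv γ u ∈ Λ := by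
          rw [hder]
          exact Λ.smul_mem _ (by simpa using Λ.neg_mem hmem)
        refine (minMetric_le_ray hOpen hConv hp hξc Λ hΛ.ge (by positivity) hdisk hv hkpos
          (hk1 u (Ioc_subset_Icc_self hu))).trans_eq ?_
        rw [hder, norm_smul, norm_sub_rev p ξ, Real.norm_eq_abs, abs_mul, abs_mul,
          abs_of_pos hkpos]
        norm_num
        field_simp
      have := intervalIntegral.norm_integral_le_of_norm_le_const hbd
      rw [sub_zero, abs_one, mul_one] at this
      exact hle.trans ((le_abs_self _).trans this)
    have hlim : Tendsto (fun η : ℝ => 2 * η⁻¹ * |t - s|) (nhdsWithin ε (Iio ε))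
        (nhds (2 * ε⁻¹ * |t - s|)) :=
      (((continuousAt_inv₀ hε.ne').const_mul 2).mul_const _).tendsto.mono_left nhdsWithin_le_nhds
    refine ge_of_tendsto hlim ?_
    filter_upwards [Ioo_mem_nhdsLT hε] with η hη using key η hη.1 hη.2
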